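/- Let p be a prime, K a field of characteristic p, and let D : K[X] → K[X] be the K-linear map D(f) = (X − X^p)·f′. Let b ∈ ℕ with b ≤ p−1. Then for f ∈ K[X], ((D − b)∘(D − (b−1))∘⋯∘(D − 1)∘D)(f) = 0 if and only if every exponent e occurring in f with nonzero coefficient satisfies e mod p ≤ b. (Here D − c denotes the operator f ↦ D(f) − c·f; these factors pairwise commute, so the order of composition is immaterial.) -/

import Mathlib

open Polynomial

/-- The operator `D : f ↦ (X − X^p)·f′` on `K[X]`. -/
noncomputable def Dtheta {K : Type*} [Field K] (p : ℕ) (f : K[X]) : K[X] :=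
  (X - X ^ p) * derivative f

/-- `DthetaComp p n f = ((D − n) ∘ ⋯ ∘ (D − 1) ∘ D) f`, where `D − c : f ↦ D f − c·f`. -/
noncomputable def DthetaComp {K : Type*} [Field K] (p : ℕ) : ℕ → K[X] → K[X]
  | 0, f => Dtheta p f
  | n + 1, f => Dtheta p (DthetaComp p n f) - ((n + 1 : ℕ) : K[X]) * DthetaComp p n f

/-!
For every polynomial `H`, the operator `f ↦ H·f′ − n·H′·f` sends `H ^ n * g` to
`H ^ (n + 1) * g′`, so the composite for `0, …, b` is `f ↦ H ^ (b + 1) * f^{(b+1)}`. Over a domain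
with `H ≠ 0` its kernel is that of the `(b + 1)`-st derivative, which kills `X ^ e` exactly when one
of `e, e − 1, …, e − b` vanishes in the base ring. For `H = X − X ^ p` one has `H′ = 1`.
-/

section Theta

variable {R : Type*} [CommRing R]

/-- The local form of the theta operator `θ₄` on the automorphic line bundle `L(k, l)` with
`k - l = n`, where `H` is a local equation of the second Hasse invariant. -/
noncomputable def theta (H : R[X]) (n : ℕ) (f : R[X]) : R[X] :=
  H * derivative f - (n : R[X]) * derivative H * f

/-- The composite of `theta H 0, …, theta H (n - 1)`, with `theta H 0` applied first. When `H″ = 0`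
these factors commute, and the composite is the local form of `θ₄ ^ n` on `L(k, l)` for
`k - l = n - 1`. Here `n` counts the factors, whereas `DthetaComp p b` has `b + 1` of them. -/
noncomputable def thetaComp (H : R[X]) : ℕ → R[X] → R[X]
  | 0, f => f
  | n + 1, f => theta H n (thetaComp H n f)

theorem theta_pow_mul (H : R[X]) (n : ℕ) (g : R[X]) :
    theta H n (H ^ n * g) = H ^ (n + 1) * derivative g := by
  cases n with
  | zero => simp [theta]
  | succ n =>
    rw [theta, derivative_mul, derivative_pow_succ]
    simp only [map_add, map_natCast, map_one, Nat.cast_succ]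
    ring

theorem thetaComp_eq_pow_mul_iterate_derivative (H : R[X]) (n : ℕ) (f : R[X]) :
    thetaComp H n f = H ^ n * derivative^[n] f := by
  induction n with
  | zero => simp [thetaComp]
  | succ n ih => rw [thetaComp, ih, theta_pow_mul, Function.iterate_succ_apply']

theorem thetaComp_eq_zero_iff_iterate_derivative_eq_zero [NoZeroDivisors R] {H : R[X]}
    (hH : H ≠ 0) (n : ℕ) (f : R[X]) :
    thetaComp H n f = 0 ↔ derivative^[n] f = 0 := by
  rw [thetaComp_eq_pow_mul_iterate_derivative, mul_eq_zero, or_iff_right (pow_ne_zero n hH)]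

end Theta

theorem iterate_derivative_eq_zero_iff_descFactorial_eq_zero {R : Type*} [Semiring R]
    [NoZeroDivisors R] (n : ℕ) (f : R[X]) :
    derivative^[n] f = 0 ↔ ∀ e ∈ f.support, (e.descFactorial n : R) = 0 := by
  constructor
  · intro h e he
    rcases lt_or_ge e n with hen | hne
    · rw [Nat.descFactorial_of_lt hen, Nat.cast_zero]
    · have hcoeff : (e.descFactorial n : R) * f.coeff e = 0 := by
        simpa [coeff_iterate_derivative, Nat.sub_add_cancel hne]
          using congrArg (coeff · (e - n)) h
      exact (mul_eq_zero.mp hcoeff).resolve_right (mem_support_iff.mp he)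
  · intro h
    ext m
    rw [coeff_iterate_derivative, coeff_zero, nsmul_eq_mul, mul_eq_zero]
    exact or_iff_not_imp_right.mpr fun hm ↦ h (m + n) (mem_support_iff.mpr hm)

theorem natCast_descFactorial_eq_zero_iff_mod_lt (p : ℕ) {R : Type*} [CommRing R] [IsDomain R]
    [CharP R p] (n e : ℕ) :
    (e.descFactorial n : R) = 0 ↔ e % p < n := by
  have hprod : (e.descFactorial n : R) = ∏ i ∈ Finset.range n, ((e : R) - i) := by
    rw [← descPochhammer_eval_eq_descFactorial, descPochhammer_eval_eq_prod_range]
  simp only [hprod, Finset.prod_eq_zero_iff, Finset.mem_range, sub_eq_zero,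
    CharP.natCast_eq_natCast R p]
  constructor
  · rintro ⟨i, hi, hei⟩
    exact (hei.trans_le (Nat.mod_le i p)).trans_lt hi
  · exact fun h ↦ ⟨e % p, h, (Nat.mod_modEq e p).symm⟩

-- In characteristic zero `e % 0 = e`, and the kernel consists of the polynomials of degree `< n`.
theorem stmt_7_general (p : ℕ) {R : Type*} [CommRing R] [IsDomain R] [CharP R p] {H : R[X]}
    (hH : H ≠ 0) (n : ℕ) (f : R[X]) :
    thetaComp H n f = 0 ↔ ∀ e ∈ f.support, e % p < n := by
  simp only [thetaComp_eq_zero_iff_iterate_derivative_eq_zero hH,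
    iterate_derivative_eq_zero_iff_descFactorial_eq_zero,
    natCast_descFactorial_eq_zero_iff_mod_lt p]

theorem derivative_X_sub_X_pow_char (p : ℕ) (R : Type*) [Ring R] [CharP R p] :
    derivative (X - X ^ p : R[X]) = 1 := by
  simp [derivative_X_pow]

theorem X_sub_X_pow_char_ne_zero (p : ℕ) (R : Type*) [Ring R] [Nontrivial R] [CharP R p] :
    (X - X ^ p : R[X]) ≠ 0 := by
  intro h
  simpa [h] using derivative_X_sub_X_pow_char p R

theorem theta_X_sub_X_pow_char (p : ℕ) {K : Type*} [Field K] [CharP K p] (n : ℕ) (f : K[X]) :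
    theta (X - X ^ p) n f = Dtheta p f - (n : K[X]) * f := by
  rw [theta, derivative_X_sub_X_pow_char, mul_one, Dtheta]

theorem DthetaComp_eq_thetaComp (p : ℕ) {K : Type*} [Field K] [CharP K p] (b : ℕ) (f : K[X]) :
    DthetaComp p b f = thetaComp (X - X ^ p) (b + 1) f := by
  induction b with
  | zero => simp [DthetaComp, thetaComp, theta_X_sub_X_pow_char]
  | succ b ih => rw [DthetaComp, ih, ← theta_X_sub_X_pow_char, ← thetaComp]

/-- Let `p` be a prime, `K` a field of characteristic `p`, `D f = (X − X^p)·f′` and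
`b ≤ p−1`.  Then `((D − b) ∘ ⋯ ∘ (D − 1) ∘ D) f = 0` if and only if every exponent `e`
occurring in `f` with nonzero coefficient satisfies `e % p ≤ b`. -/
theorem stmt_7 (p : ℕ) (hp : p.Prime) (K : Type*) [Field K] [CharP K p]
    (b : ℕ) (hb : b ≤ p - 1) (f : K[X]) :
    DthetaComp p b f = 0 ↔ ∀ e ∈ f.support, e % p ≤ b := by
  simpa only [DthetaComp_eq_thetaComp, Nat.lt_succ_iff] using
    stmt_7_general p (X_sub_X_pow_char_ne_zero p K) (b + 1) f
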